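/- Along the cycle chart, the orthonormal normal frame N₁, N₂ satisfies, for every u: N₁(u,0) = N(u), N₂(u,0) = B(u), ∂N₁/∂v(u,0) = τ_N(u)t(u) − K(u)T(u), and ∂N₂/∂v(u,0) = τ(u)t(u) − K̄(u)T(u). -/

import Mathlib

/-!
Since `N₁` and `N₂` are smooth near the curve `v = 0`, their `v`-partials there are derivatives of
one-variable curves, so only first-order data of `α_u` and `α_v` in `v` matter. The cubic part of
the chart is `v² W(u,v)` with `W(u,0) = (K N + K̄ B)/2`, which gives `α_v(u,0) = T` and
`α_vv(u,0) = K N + K̄ B`; also `α_u(u,0) = c' = t`, and by symmetry of second derivatives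
`α_uv(u,0) = ∂_u (α_v(u,0)) = T' = -k_g t - τ_N N - τ B`.

Hence `B̄₁ = N + v (τ_N t - K T - k_g N) + O(v²)`, and the trilinear wedge satisfies
`B̄₂ = B + v (τ t - K̄ T - 2 k_g B) + O(v²)`, using `t ∧ T ∧ N = B` and its two permuted versions
(`wedge_frame`). Normalizing a curve that starts at a unit vector removes the component of its
velocity along that vector (`hasDerivAt_normalize`), which leaves the stated derivatives.
-/


noncomputable section

open scoped RealInnerProductSpace

abbrev E4 : Type := EuclideanSpace ℝ (Fin 4)

/-- Partial derivative with respect to the first variable `u`. -/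
def pdu {X : Type*} [NormedAddCommGroup X] [NormedSpace ℝ X]
    (f : ℝ × ℝ → X) (p : ℝ × ℝ) : X := fderiv ℝ f p (1, 0)

/-- Partial derivative with respect to the second variable `v`. -/
def pdv {X : Type*} [NormedAddCommGroup X] [NormedSpace ℝ X]
    (f : ℝ × ℝ → X) (p : ℝ × ℝ) : X := fderiv ℝ f p (0, 1)

/-- The wedge `x ∧ y ∧ z` of three vectors of `ℝ⁴`: the unique vector satisfying
`⟪x ∧ y ∧ z, w⟫ = det (x, y, z, w)` for all `w ∈ ℝ⁴`. -/
def wedge (x y z : E4) : E4 :=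
  (WithLp.equiv 2 (Fin 4 → ℝ)).symm fun i =>
    Matrix.det (Matrix.of ![(x : Fin 4 → ℝ), y, z, fun j => if j = i then 1 else 0])

namespace Cycle

/-- Coefficient `E` of the first fundamental form. -/
def Ec (α : ℝ × ℝ → E4) (p : ℝ × ℝ) : ℝ := ⟪pdu α p, pdu α p⟫
/-- Coefficient `F` of the first fundamental form. -/
def Fc (α : ℝ × ℝ → E4) (p : ℝ × ℝ) : ℝ := ⟪pdu α p, pdv α p⟫
/-- Coefficient `G` of the first fundamental form. -/
def Gc (α : ℝ × ℝ → E4) (p : ℝ × ℝ) : ℝ := ⟪pdv α p, pdv α p⟫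

/-- `x₁ = ⟨α_u, t⟩`. -/
def x1 (α : ℝ × ℝ → E4) (t : ℝ → E4) (p : ℝ × ℝ) : ℝ := ⟪pdu α p, t p.1⟫
/-- `x₂ = ⟨α_u, T⟩`. -/
def x2 (α : ℝ × ℝ → E4) (T : ℝ → E4) (p : ℝ × ℝ) : ℝ := ⟪pdu α p, T p.1⟫
/-- `x₃ = ⟨α_u, N⟩`. -/
def x3 (α : ℝ × ℝ → E4) (N : ℝ → E4) (p : ℝ × ℝ) : ℝ := ⟪pdu α p, N p.1⟫
/-- `y₁ = ⟨α_v, N⟩`. -/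
def y1 (α : ℝ × ℝ → E4) (N : ℝ → E4) (p : ℝ × ℝ) : ℝ := ⟪pdv α p, N p.1⟫

/-- `B̄₁ = (y₁x₂ − x₃)t − x₁y₁T + x₁N`. -/
def Bb1 (α : ℝ × ℝ → E4) (t T N : ℝ → E4) (p : ℝ × ℝ) : E4 :=
  (y1 α N p * x2 α T p - x3 α N p) • t p.1 - (x1 α t p * y1 α N p) • T p.1 + x1 α t p • N p.1

/-- `B̄₂ = α_u ∧ α_v ∧ B̄₁`. -/
def Bb2 (α : ℝ × ℝ → E4) (t T N : ℝ → E4) (p : ℝ × ℝ) : E4 :=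
  wedge (pdu α p) (pdv α p) (Bb1 α t T N p)

/-- `N₁ = B̄₁/|B̄₁|`. -/
def N1 (α : ℝ × ℝ → E4) (t T N : ℝ → E4) (p : ℝ × ℝ) : E4 :=
  ‖Bb1 α t T N p‖⁻¹ • Bb1 α t T N p

/-- `N₂ = B̄₂/|B̄₂|`. -/
def N2 (α : ℝ × ℝ → E4) (t T N : ℝ → E4) (p : ℝ × ℝ) : E4 :=
  ‖Bb2 α t T N p‖⁻¹ • Bb2 α t T N p

def e1 (α : ℝ × ℝ → E4) (t T N : ℝ → E4) (p : ℝ × ℝ) : ℝ := ⟪pdu (pdu α) p, N1 α t T N p⟫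
def f1 (α : ℝ × ℝ → E4) (t T N : ℝ → E4) (p : ℝ × ℝ) : ℝ := ⟪pdv (pdu α) p, N1 α t T N p⟫
def g1 (α : ℝ × ℝ → E4) (t T N : ℝ → E4) (p : ℝ × ℝ) : ℝ := ⟪pdv (pdv α) p, N1 α t T N p⟫
def e2 (α : ℝ × ℝ → E4) (t T N : ℝ → E4) (p : ℝ × ℝ) : ℝ := ⟪pdu (pdu α) p, N2 α t T N p⟫
def f2 (α : ℝ × ℝ → E4) (t T N : ℝ → E4) (p : ℝ × ℝ) : ℝ := ⟪pdv (pdu α) p, N2 α t T N p⟫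
def g2 (α : ℝ × ℝ → E4) (t T N : ℝ → E4) (p : ℝ × ℝ) : ℝ := ⟪pdv (pdv α) p, N2 α t T N p⟫

/-- `H̃₁ = (E g₁ − 2F f₁ + G e₁)/(2(EG − F²))`. -/
def Ht1 (α : ℝ × ℝ → E4) (t T N : ℝ → E4) (p : ℝ × ℝ) : ℝ :=
  (Ec α p * g1 α t T N p - 2 * Fc α p * f1 α t T N p + Gc α p * e1 α t T N p) /
    (2 * (Ec α p * Gc α p - Fc α p ^ 2))

/-- `H̃₂ = (E g₂ − 2F f₂ + G e₂)/(2(EG − F²))`. -/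
def Ht2 (α : ℝ × ℝ → E4) (t T N : ℝ → E4) (p : ℝ × ℝ) : ℝ :=
  (Ec α p * g2 α t T N p - 2 * Fc α p * f2 α t T N p + Gc α p * e2 α t T N p) /
    (2 * (Ec α p * Gc α p - Fc α p ^ 2))

/-- The mean curvature vector `H = H̃₁N₁ + H̃₂N₂`. -/
def Hvec (α : ℝ × ℝ → E4) (t T N : ℝ → E4) (p : ℝ × ℝ) : E4 :=
  Ht1 α t T N p • N1 α t T N p + Ht2 α t T N p • N2 α t T N p

def eH (α : ℝ × ℝ → E4) (t T N : ℝ → E4) (p : ℝ × ℝ) : ℝ := ⟪pdu (pdu α) p, Hvec α t T N p⟫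
def fH (α : ℝ × ℝ → E4) (t T N : ℝ → E4) (p : ℝ × ℝ) : ℝ := ⟪pdv (pdu α) p, Hvec α t T N p⟫
def gH (α : ℝ × ℝ → E4) (t T N : ℝ → E4) (p : ℝ × ℝ) : ℝ := ⟪pdv (pdv α) p, Hvec α t T N p⟫

end Cycle

open Cycle

/-! ### Partial derivatives -/

lemma hasDerivAt_of_eq {X : Type*} [NormedAddCommGroup X] [NormedSpace ℝ X] {f g : ℝ → X}
    {f' g' : X} {s : ℝ} (h : HasDerivAt f f' s) (hf : ∀ v, f v = g v) (hf' : f' = g') :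
    HasDerivAt g g' s := by
  obtain rfl : f = g := funext hf
  exact hf' ▸ h

lemma hasDerivAt_pdv {X : Type*} [NormedAddCommGroup X] [NormedSpace ℝ X]
    {f : ℝ × ℝ → X} {u v : ℝ} (hf : DifferentiableAt ℝ f (u, v)) :
    HasDerivAt (fun s => f (u, s)) (pdv f (u, v)) v :=
  hf.hasFDerivAt.comp_hasDerivAt v ((hasDerivAt_const v u).prodMk (hasDerivAt_id v))

lemma hasDerivAt_pdu {X : Type*} [NormedAddCommGroup X] [NormedSpace ℝ X]
    {f : ℝ × ℝ → X} {u v : ℝ} (hf : DifferentiableAt ℝ f (u, v)) :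
    HasDerivAt (fun s => f (s, v)) (pdu f (u, v)) u :=
  hf.hasFDerivAt.comp_hasDerivAt u ((hasDerivAt_id u).prodMk (hasDerivAt_const u v))

lemma contDiff_pdu {X : Type*} [NormedAddCommGroup X] [NormedSpace ℝ X]
    {f : ℝ × ℝ → X} (hf : ContDiff ℝ (⊤ : ℕ∞) f) : ContDiff ℝ (⊤ : ℕ∞) (pdu f) :=
  (hf.fderiv_right (m := ((⊤ : ℕ∞) : WithTop ℕ∞)) (by simp)).clm_apply contDiff_const

lemma contDiff_pdv {X : Type*} [NormedAddCommGroup X] [NormedSpace ℝ X]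
    {f : ℝ × ℝ → X} (hf : ContDiff ℝ (⊤ : ℕ∞) f) : ContDiff ℝ (⊤ : ℕ∞) (pdv f) :=
  (hf.fderiv_right (m := ((⊤ : ℕ∞) : WithTop ℕ∞)) (by simp)).clm_apply contDiff_const

/-- Symmetry of second derivatives, in terms of the partials `pdu` and `pdv`. -/
lemma pdv_pdu_comm {X : Type*} [NormedAddCommGroup X] [NormedSpace ℝ X]
    {f : ℝ × ℝ → X} (hf : ContDiff ℝ (⊤ : ℕ∞) f) (p : ℝ × ℝ) :
    pdv (pdu f) p = pdu (pdv f) p := by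
  have hd : DifferentiableAt ℝ (fderiv ℝ f) p :=
    (hf.fderiv_right (m := ((⊤ : ℕ∞) : WithTop ℕ∞)) (by simp)).differentiable (by simp) p
  have hs : IsSymmSndFDerivAt ℝ f p :=
    hf.contDiffAt.isSymmSndFDerivAt (by
      rw [minSmoothness_of_isRCLikeNormedField]
      exact WithTop.coe_le_coe.2 le_top)
  have key : ∀ w : ℝ × ℝ, fderiv ℝ (fun q => fderiv ℝ f q w) p =
      (fderiv ℝ (fderiv ℝ f) p).flip w := by
    intro w
    rw [fderiv_clm_apply hd (differentiableAt_const w)]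
    simp
  change fderiv ℝ (fun q => fderiv ℝ f q (1, 0)) p (0, 1) =
    fderiv ℝ (fun q => fderiv ℝ f q (0, 1)) p (1, 0)
  rw [key, key]
  exact hs.eq _ _

/-! ### Normalizing a curve through a unit vector -/

/-- Normalizing a curve through the unit vector `X s` projects its velocity orthogonally to
`X s`. -/
lemma hasDerivAt_normalize {X : ℝ → E4} {X' : E4} {s : ℝ} (h : HasDerivAt X X' s)
    (h1 : ⟪X s, X s⟫ = (1 : ℝ)) :
    HasDerivAt (fun v => ‖X v‖⁻¹ • X v) (X' - (⟪X s, X'⟫ : ℝ) • X s) s := by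
  have hn : ‖X s‖ = 1 := by
    have := real_inner_self_eq_norm_sq (X s)
    rw [h1] at this
    nlinarith [norm_nonneg (X s)]
  have h0 : X s ≠ 0 := by
    intro h0
    simp [h0] at hn
  have hs : HasDerivAt (fun v => ‖X v‖) (⟪X s, X'⟫ : ℝ) s := by
    have h2 := (h.inner ℝ h).sqrt (by rw [h1]; norm_num)
    rw [h1] at h2
    have e : (fun v => ‖X v‖) = fun v => √(⟪X v, X v⟫ : ℝ) := by
      funext v
      rw [real_inner_self_eq_norm_sq, Real.sqrt_sq (norm_nonneg _)]
    rw [e]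
    convert h2 using 1
    rw [real_inner_comm X' (X s), Real.sqrt_one]
    ring
  refine hasDerivAt_of_eq ((hs.inv (by rw [hn]; norm_num)).smul h) (fun v => rfl) ?_
  simp [hn, sub_eq_add_neg]

/-! ### The wedge product in `ℝ⁴` -/

lemma wedge_apply (x y z : E4) (i : Fin 4) : wedge x y z i =
    Matrix.det (Matrix.of ![(x : Fin 4 → ℝ), y, z, fun j => if j = i then 1 else 0]) := rfl

lemma det_four (x y z w : Fin 4 → ℝ) : Matrix.det (Matrix.of ![x, y, z, w]) =
    x 0 * (y 1 * (z 2 * w 3 - z 3 * w 2) - y 2 * (z 1 * w 3 - z 3 * w 1)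
      + y 3 * (z 1 * w 2 - z 2 * w 1))
    - x 1 * (y 0 * (z 2 * w 3 - z 3 * w 2) - y 2 * (z 0 * w 3 - z 3 * w 0)
      + y 3 * (z 0 * w 2 - z 2 * w 0))
    + x 2 * (y 0 * (z 1 * w 3 - z 3 * w 1) - y 1 * (z 0 * w 3 - z 3 * w 0)
      + y 3 * (z 0 * w 1 - z 1 * w 0))
    - x 3 * (y 0 * (z 1 * w 2 - z 2 * w 1) - y 1 * (z 0 * w 2 - z 2 * w 0)
      + y 2 * (z 0 * w 1 - z 1 * w 0)) := by
  simp [Matrix.det_succ_row_zero, Fin.sum_univ_succ, Fin.succAbove]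
  ring

lemma inner_four (x y : E4) :
    (⟪x, y⟫ : ℝ) = x 0 * y 0 + x 1 * y 1 + x 2 * y 2 + x 3 * y 3 := by
  simp [PiLp.inner_apply, Fin.sum_univ_four, mul_comm]

/-- The defining property of the wedge product. -/
lemma inner_wedge (x y z w : E4) :
    (⟪wedge x y z, w⟫ : ℝ) = Matrix.det (Matrix.of ![(x : Fin 4 → ℝ), y, z, w]) := by
  rw [inner_four]
  simp only [wedge_apply, det_four]
  simp
  ring

/-- The wedge of three vectors of an orthonormal basis is the fourth one, up to the orientation
`d` of the basis. -/
lemma wedge_frame {x y z w : E4} {d : ℝ} (hd : d ≠ 0)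
    (hdet : Matrix.det (Matrix.of ![(x : Fin 4 → ℝ), y, z, w]) = d)
    (hxw : (⟪x, w⟫ : ℝ) = 0) (hyw : (⟪y, w⟫ : ℝ) = 0) (hzw : (⟪z, w⟫ : ℝ) = 0)
    (hww : (⟪w, w⟫ : ℝ) = 1) : wedge x y z = d • w := by
  -- The difference is orthogonal to the four rows of an invertible matrix.
  have h0 : (fun i => wedge x y z i - d * w i) = (0 : Fin 4 → ℝ) := by
    refine Matrix.eq_zero_of_mulVec_eq_zero (M := Matrix.of ![(x : Fin 4 → ℝ), y, z, w])
      (by rw [hdet]; exact hd) ?_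
    have hx := inner_wedge x y z x
    have hy := inner_wedge x y z y
    have hz := inner_wedge x y z z
    have hw := inner_wedge x y z w
    rw [hdet] at hw
    rw [det_four] at hx hy hz
    rw [inner_four] at hx hy hz hw hxw hyw hzw hww
    ext i
    fin_cases i <;> simp [Matrix.mulVec, dotProduct, Fin.sum_univ_four]
    · linear_combination hx - d * hxw
    · linear_combination hy - d * hyw
    · linear_combination hz - d * hzw
    · linear_combination hw - d * hww
  ext i
  have := congrFun h0 i
  simp at this ⊢
  linarith

/-- Trilinearity of the wedge together with its vanishing on a repeated vector, in the form needed
for a velocity in the first slot; the next two lemmas treat the other slots. -/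
lemma wedge_comb_left (x y z w : E4) (p q r : ℝ) :
    wedge (p • x - q • z - r • w) y z = p • wedge x y z - r • wedge w y z := by
  ext i
  simp only [PiLp.sub_apply, PiLp.smul_apply, wedge_apply, det_four, smul_eq_mul]
  ring

lemma wedge_comb_mid (x z w : E4) (q r : ℝ) :
    wedge x (q • z + r • w) z = r • wedge x w z := by
  ext i
  simp only [PiLp.add_apply, PiLp.smul_apply, wedge_apply, det_four, smul_eq_mul]
  ring

lemma wedge_comb_right (x y z : E4) (p q r : ℝ) :
    wedge x y (p • x - q • y - r • z) = -r • wedge x y z := by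
  ext i
  simp only [PiLp.sub_apply, PiLp.smul_apply, wedge_apply, det_four, smul_eq_mul]
  ring

/-! ### Smoothness and product rule for the wedge -/

/-- The `3 × 3` determinant with rows `x`, `y`, `z` and columns `a`, `b`, `c`. -/
def minor (x y z : E4) (a b c : Fin 4) : ℝ :=
  x a * (y b * z c - y c * z b) - x b * (y a * z c - y c * z a) + x c * (y a * z b - y b * z a)

/-- Cofactor expansion along the last row. -/
lemma wedge_eq_minor (x y z : E4) : wedge x y z =
    WithLp.toLp 2 ![-minor x y z 1 2 3, minor x y z 0 2 3, -minor x y z 0 1 3, minor x y z 0 1 2] := by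
  ext i
  rw [wedge_apply, det_four]
  fin_cases i <;> simp [minor] <;> ring

lemma hasDerivAt_coord {x : ℝ → E4} {x' : E4} {s : ℝ} (hx : HasDerivAt x x' s) (i : Fin 4) :
    HasDerivAt (fun v => x v i) (x' i) s :=
  (EuclideanSpace.proj (𝕜 := ℝ) i).hasFDerivAt.comp_hasDerivAt s hx

lemma contDiff_wedge {f g h : ℝ × ℝ → E4} (hf : ContDiff ℝ (⊤ : ℕ∞) f)
    (hg : ContDiff ℝ (⊤ : ℕ∞) g) (hh : ContDiff ℝ (⊤ : ℕ∞) h) :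
    ContDiff ℝ (⊤ : ℕ∞) (fun p => wedge (f p) (g p) (h p)) := by
  rw [contDiff_euclidean] at *
  intro i
  have f0 := hf 0; have f1 := hf 1; have f2 := hf 2; have f3 := hf 3
  have g0 := hg 0; have g1 := hg 1; have g2 := hg 2; have g3 := hg 3
  have h0 := hh 0; have h1 := hh 1; have h2 := hh 2; have h3 := hh 3
  simp only [wedge_apply, det_four]
  fun_prop

/-- Derivative of the `3 × 3` determinant with columns `a`, `b`, `c`. -/
lemma hasDerivAt_minor {x y z : ℝ → E4} {x' y' z' : E4} {s : ℝ} (hx : HasDerivAt x x' s)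
    (hy : HasDerivAt y y' s) (hz : HasDerivAt z z' s) (a b c : Fin 4) :
    HasDerivAt (fun v => minor (x v) (y v) (z v) a b c)
      (minor x' (y s) (z s) a b c + minor (x s) y' (z s) a b c + minor (x s) (y s) z' a b c) s := by
  have hX := hasDerivAt_coord hx
  have hY := hasDerivAt_coord hy
  have hZ := hasDerivAt_coord hz
  unfold minor
  refine hasDerivAt_of_eq ((((hX a).mul (((hY b).mul (hZ c)).sub ((hY c).mul (hZ b)))).sub
    ((hX b).mul (((hY a).mul (hZ c)).sub ((hY c).mul (hZ a))))).add
    ((hX c).mul (((hY a).mul (hZ b)).sub ((hY b).mul (hZ a))))) (fun v => rfl) ?_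
  simp
  ring

lemma hasDerivAt_wedge {x y z : ℝ → E4} {x' y' z' : E4} {s : ℝ} (hx : HasDerivAt x x' s)
    (hy : HasDerivAt y y' s) (hz : HasDerivAt z z' s) :
    HasDerivAt (fun v => wedge (x v) (y v) (z v))
      (wedge x' (y s) (z s) + wedge (x s) y' (z s) + wedge (x s) (y s) z') s := by
  have hM := hasDerivAt_minor hx hy hz
  simp only [wedge_eq_minor]
  have key := hasDerivAt_pi (φ := fun v => (![-minor (x v) (y v) (z v) 1 2 3,
      minor (x v) (y v) (z v) 0 2 3, -minor (x v) (y v) (z v) 0 1 3,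
      minor (x v) (y v) (z v) 0 1 2] : Fin 4 → ℝ)) (x := s)
    (φ' := ![_, _, _, _]) |>.2 fun i => by
      fin_cases i
      · exact (hM 1 2 3).neg
      · exact hM 0 2 3
      · exact (hM 0 1 3).neg
      · exact hM 0 1 2
  refine hasDerivAt_of_eq ((PiLp.continuousLinearEquiv 2 ℝ
    (fun _ : Fin 4 => ℝ)).symm.toContinuousLinearMap.hasFDerivAt.comp_hasDerivAt s key)
    (fun v => rfl) ?_
  ext i
  fin_cases i <;> simp <;> ring

/-! ### The normal frame along the cycle -/

/-- the orthonormal normal frame `N₁, N₂` along the cycle chart satisfies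
`N₁(u,0) = N(u)`, `N₂(u,0) = B(u)`, `(N₁)_v(u,0) = τ_N t − K T`, `(N₂)_v(u,0) = τ t − K̄ T`. -/
theorem stmt12
    (L : ℝ) (hL : 0 < L)
    (t T N B c : ℝ → E4) (kg k kB τN τ τB K Kb a b : ℝ → ℝ) (A Ab : ℝ × ℝ → ℝ)
    (htsm : ContDiff ℝ (⊤ : ℕ∞) t) (hTsm : ContDiff ℝ (⊤ : ℕ∞) T) (hNsm : ContDiff ℝ (⊤ : ℕ∞) N)
    (hBsm : ContDiff ℝ (⊤ : ℕ∞) B) (hcsm : ContDiff ℝ (⊤ : ℕ∞) c)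
    (hkgsm : ContDiff ℝ (⊤ : ℕ∞) kg) (hksm : ContDiff ℝ (⊤ : ℕ∞) k) (hkBsm : ContDiff ℝ (⊤ : ℕ∞) kB)
    (hτNsm : ContDiff ℝ (⊤ : ℕ∞) τN) (hτsm : ContDiff ℝ (⊤ : ℕ∞) τ) (hτBsm : ContDiff ℝ (⊤ : ℕ∞) τB)
    (hKsm : ContDiff ℝ (⊤ : ℕ∞) K) (hKbsm : ContDiff ℝ (⊤ : ℕ∞) Kb) (hasm : ContDiff ℝ (⊤ : ℕ∞) a)
    (hbsm : ContDiff ℝ (⊤ : ℕ∞) b) (hAsm : ContDiff ℝ (⊤ : ℕ∞) A) (hAbsm : ContDiff ℝ (⊤ : ℕ∞) Ab)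
    (htper : Function.Periodic t L) (hTper : Function.Periodic T L)
    (hNper : Function.Periodic N L) (hBper : Function.Periodic B L)
    (hcper : Function.Periodic c L)
    (hkgper : Function.Periodic kg L) (hkper : Function.Periodic k L)
    (hkBper : Function.Periodic kB L) (hτNper : Function.Periodic τN L)
    (hτper : Function.Periodic τ L) (hτBper : Function.Periodic τB L)
    (hKper : Function.Periodic K L) (hKbper : Function.Periodic Kb L)
    (haper : Function.Periodic a L) (hbper : Function.Periodic b L)
    (hAper : ∀ u v : ℝ, A (u + L, v) = A (u, v)) (hAbper : ∀ u v : ℝ, Ab (u + L, v) = Ab (u, v))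
    (hortho : ∀ u : ℝ, ⟪t u, t u⟫ = 1 ∧ ⟪T u, T u⟫ = 1 ∧ ⟪N u, N u⟫ = 1 ∧
      ⟪B u, B u⟫ = 1 ∧ ⟪t u, T u⟫ = 0 ∧ ⟪t u, N u⟫ = 0 ∧ ⟪t u, B u⟫ = 0 ∧
      ⟪T u, N u⟫ = 0 ∧ ⟪T u, B u⟫ = 0 ∧ ⟪N u, B u⟫ = 0)
    (hdet : ∀ u : ℝ, Matrix.det (Matrix.of ![(t u : Fin 4 → ℝ), T u, N u, B u]) = 1)
    (hDt : ∀ u : ℝ, deriv t u = kg u • T u + k u • N u + kB u • B u)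
    (hDT : ∀ u : ℝ, deriv T u = -(kg u) • t u - τN u • N u - τ u • B u)
    (hDN : ∀ u : ℝ, deriv N u = -(k u) • t u + τN u • T u + τB u • B u)
    (hDB : ∀ u : ℝ, deriv B u = -(kB u) • t u + τ u • T u - τB u • N u)
    (hct : ∀ u : ℝ, deriv c u = t u)
    (hA0 : ∀ u : ℝ, A (u, 0) = 0) (hAb0 : ∀ u : ℝ, Ab (u, 0) = 0)
    (α : ℝ × ℝ → E4)
    (hα : ∀ u v : ℝ, α (u, v) = c u + v • T u +
      (K u * v ^ 2 / 2 + a u * v ^ 3 / 6 + v ^ 3 * A (u, v)) • N u +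
      (Kb u * v ^ 2 / 2 + b u * v ^ 3 / 6 + v ^ 3 * Ab (u, v)) • B u) :
    ∀ u : ℝ,
      N1 α t T N (u, 0) = N u ∧
      N2 α t T N (u, 0) = B u ∧
      pdv (N1 α t T N) (u, 0) = τN u • t u - K u • T u ∧
      pdv (N2 α t T N) (u, 0) = τ u • t u - Kb u • T u := by
  intro u
  obtain ⟨htt, hTT, hNN, hBB, htT, htN, htB, hTN, hTB, hNB⟩ := hortho u
  have hnorm {X : E4} (hX : (⟪X, X⟫ : ℝ) = 1) : ‖X‖ = 1 := by
    rw [real_inner_self_eq_norm_sq] at hX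
    nlinarith [norm_nonneg X]
  have nt := hnorm htt
  have nN := hnorm hNN
  have nB := hnorm hBB
  -- The chart is `c + v T + v² W` with `W` smooth.
  let W : ℝ × ℝ → E4 := fun p => (K p.1 / 2 + a p.1 * p.2 / 6 + p.2 * A p) • N p.1 +
    (Kb p.1 / 2 + b p.1 * p.2 / 6 + p.2 * Ab p) • B p.1
  have hW : ContDiff ℝ (⊤ : ℕ∞) W := by fun_prop
  have hαW : α = fun p => c p.1 + p.2 • T p.1 + p.2 ^ 2 • W p := by
    funext ⟨p, q⟩
    rw [hα]
    simp only [W]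
    module
  have hαsm : ContDiff ℝ (⊤ : ℕ∞) α := by rw [hαW]; fun_prop
  have hPsm := contDiff_pdu hαsm
  have hQsm := contDiff_pdv hαsm
  have hd {X : Type} [NormedAddCommGroup X] [NormedSpace ℝ X] {f : ℝ × ℝ → X}
      (hf : ContDiff ℝ (⊤ : ℕ∞) f) (p : ℝ × ℝ) : DifferentiableAt ℝ f p :=
    hf.differentiable (by simp) p
  -- `α_v` for all `s`, since it is differentiated once more in `v` and, at `v = 0`, in `u`.
  have hQ (s v : ℝ) : pdv α (s, v) = T s + (2 * v) • W (s, v) + v ^ 2 • pdv W (s, v) := by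
    refine (hasDerivAt_pdv (hd hαsm (s, v))).unique ?_
    have h1 := (((hasDerivAt_id v).smul_const (T s)).const_add (c s)).add
      (((hasDerivAt_id v).pow 2).smul (hasDerivAt_pdv (hd hW (s, v))))
    rw [hαW]
    refine hasDerivAt_of_eq h1 (fun w => rfl) ?_
    simp
    module
  have hQ0 (s : ℝ) : pdv α (s, 0) = T s := by simp [hQ]
  have hP0 : pdu α (u, 0) = t u := by
    refine (hasDerivAt_pdu (hd hαsm (u, 0))).unique ?_
    rw [← hct u, hαW]
    simpa using (hcsm.differentiable (by simp) u).hasDerivAt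
  have hQ' : HasDerivAt (fun v => pdv α (u, v)) (K u • N u + Kb u • B u) 0 := by
    simp only [hQ]
    have h1 := ((((hasDerivAt_id (0 : ℝ)).const_mul 2).smul
      (hasDerivAt_pdv (hd hW (u, 0)))).const_add (T u)).add
      (((hasDerivAt_id (0 : ℝ)).pow 2).smul (hasDerivAt_pdv (hd (contDiff_pdv hW) (u, 0))))
    refine hasDerivAt_of_eq h1 (fun w => rfl) ?_
    simp [W]
    module
  have hP' : HasDerivAt (fun v => pdu α (u, v)) (-(kg u) • t u - τN u • N u - τ u • B u) 0 := by
    have h1 := hasDerivAt_pdv (hd hPsm (u, 0))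
    rw [pdv_pdu_comm hαsm] at h1
    have h2 : pdu (pdv α) (u, 0) = deriv T u := by
      refine (hasDerivAt_pdu (hd hQsm (u, 0))).unique ?_
      simp only [hQ0]
      exact (hTsm.differentiable (by simp) u).hasDerivAt
    rwa [h2, hDT] at h1
  have hBb1sm : ContDiff ℝ (⊤ : ℕ∞) (Bb1 α t T N) := by
    unfold Bb1 x1 x2 x3 y1
    have i1 {f g : ℝ × ℝ → E4} (hf : ContDiff ℝ (⊤ : ℕ∞) f) (hg : ContDiff ℝ (⊤ : ℕ∞) g) :
      ContDiff ℝ (⊤ : ℕ∞) fun p => (⟪f p, g p⟫ : ℝ) := hf.inner ℝ hg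
    fun_prop
  have hBb2sm : ContDiff ℝ (⊤ : ℕ∞) (Bb2 α t T N) := contDiff_wedge hPsm hQsm hBb1sm
  have hc (X : E4) {f : ℝ → E4} {f' : E4} (hf : HasDerivAt f f' 0) :
      HasDerivAt (fun v => (⟪f v, X⟫ : ℝ)) ⟪f', X⟫ 0 := by
    simpa using hf.inner ℝ (hasDerivAt_const (0 : ℝ) X)
  -- `x₁, x₂, x₃, y₁` to first order in `v`.
  have hx1 : HasDerivAt (fun v => x1 α t (u, v)) (-kg u) 0 := by
    refine hasDerivAt_of_eq (hc (t u) hP') (fun w => rfl) ?_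
    simp [inner_sub_left, inner_smul_left, real_inner_comm, *]
  have hx2 : HasDerivAt (fun v => x2 α T (u, v)) 0 0 := by
    refine hasDerivAt_of_eq (hc (T u) hP') (fun w => rfl) ?_
    rw [real_inner_comm] at hTN hTB
    simp [inner_sub_left, inner_smul_left, *]
  have hx3 : HasDerivAt (fun v => x3 α N (u, v)) (-τN u) 0 := by
    refine hasDerivAt_of_eq (hc (N u) hP') (fun w => rfl) ?_
    rw [real_inner_comm] at hNB
    simp [inner_sub_left, inner_smul_left, *]
  have hy1 : HasDerivAt (fun v => y1 α N (u, v)) (K u) 0 := by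
    refine hasDerivAt_of_eq (hc (N u) hQ') (fun w => rfl) ?_
    rw [real_inner_comm] at hNB
    simp [inner_add_left, inner_smul_left, *]
  have x10 : x1 α t (u, 0) = 1 := by simp [x1, hP0, nt]
  have x20 : x2 α T (u, 0) = 0 := by simp [x2, hP0, htT]
  have x30 : x3 α N (u, 0) = 0 := by simp [x3, hP0, htN]
  have y10 : y1 α N (u, 0) = 0 := by simp [y1, hQ0, hTN]
  have hR0 : Bb1 α t T N (u, 0) = N u := by simp [Bb1, x10, x20, x30, y10]
  have hR' : HasDerivAt (fun v => Bb1 α t T N (u, v))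
      (τN u • t u - K u • T u - kg u • N u) 0 := by
    have h1 := ((((hy1.mul hx2).sub hx3).smul_const (t u)).sub
      ((hx1.mul hy1).smul_const (T u))).add (hx1.smul_const (N u))
    refine hasDerivAt_of_eq h1 (fun w => rfl) ?_
    simp [x10, x20, y10]
    module
  -- The three wedges of frame vectors that enter `B̄₂` to first order.
  have w1 : wedge (t u) (T u) (N u) = B u := by
    simpa using wedge_frame one_ne_zero (hdet u) htB hTB hNB hBB
  have w2 : wedge (B u) (T u) (N u) = -t u := by
    have h := hdet u
    rw [real_inner_comm] at htT htN htB
    simpa using wedge_frame (x := B u) (y := T u) (z := N u) (w := t u) (d := -1) (by norm_num)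
      (by rw [det_four] at h ⊢; linarith) htB htT htN htt
  have w3 : wedge (t u) (B u) (N u) = -T u := by
    have h := hdet u
    rw [real_inner_comm] at hTN hTB
    simpa using wedge_frame (x := t u) (y := B u) (z := N u) (w := T u) (d := -1) (by norm_num)
      (by rw [det_four] at h ⊢; linarith) htT hTB hTN hTT
  have hS0 : Bb2 α t T N (u, 0) = B u := by
    rw [Bb2, hP0, hQ0, hR0, w1]
  have hS' : HasDerivAt (fun v => Bb2 α t T N (u, v))
      (τ u • t u - Kb u • T u - (2 * kg u) • B u) 0 := by
    refine hasDerivAt_of_eq (hasDerivAt_wedge hP' hQ' hR') (fun w => rfl) ?_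
    rw [hP0, hQ0, hR0]
    rw [wedge_comb_left, wedge_comb_mid, wedge_comb_right, w1, w2, w3]
    module
  have hN1' := hasDerivAt_normalize hR' (by rw [hR0, hNN])
  have hN2' := hasDerivAt_normalize hS' (by rw [hS0, hBB])
  -- `pdv` is a Fréchet derivative, so differentiability in both variables is needed for it not to
  -- take its junk value.
  have hn {f : ℝ × ℝ → E4} (hf : ContDiff ℝ (⊤ : ℕ∞) f) {X : E4} (h0 : f (u, 0) = X)
      (hX : (⟪X, X⟫ : ℝ) = 1) : DifferentiableAt ℝ (fun p => ‖f p‖⁻¹ • f p) (u, 0) := by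
    have hne : f (u, 0) ≠ 0 := by
      rw [h0]
      rintro rfl
      simp at hX
    exact (((hd hf _).norm ℝ hne).inv (norm_ne_zero_iff.2 hne)).smul (hd hf _)
  refine ⟨?_, ?_, ?_, ?_⟩
  · simp [N1, hR0, nN]
  · simp [N2, hS0, nB]
  · rw [(hasDerivAt_pdv (f := N1 α t T N) (hn hBb1sm hR0 hNN)).unique hN1', hR0]
    rw [real_inner_comm] at htN hTN
    simp [inner_sub_right, inner_smul_right, *]
  · rw [(hasDerivAt_pdv (f := N2 α t T N) (hn hBb2sm hS0 hBB)).unique hN2', hS0]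
    rw [real_inner_comm] at htB hTB
    simp [inner_sub_right, inner_smul_right, *]
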